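/- Let q : ℝ → ℝ^d, φ : ℝ^d → ℝ^m, and f : ℝ^m → ℝ be C^∞, fix an integer k ≥ 1 and a time t ∈ ℝ, and define H(h), H_GN(h) as below. Then the difference between the true Hessian block and the Gauss-Newton Hessian block converges as h → 0⁺ to the contraction of the second derivative of φ with the kinematic limit of the gradients: lim_{h → 0⁺} ( H(h) − H_GN(h) ) = D²φ(q(t)) · [ (−1)^k · (d/dt)^k ( ∇f(z^{(k)}(t)) ) ]. In particular, H(h) − H_GN(h) remains bounded as h → 0⁺. -/

import Mathlib

/-!
STATEMENT 2: With smooth `q, φ, f`, `k ≥ 1`, `t ∈ ℝ`, clique values `v_i(h)` as in the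
context, true Hessian block `H(h)` and Gauss-Newton block `H_GN(h)`, we have
`lim_{h→0⁺} (H(h) - H_GN(h)) = D²φ(q(t)) · [(-1)^k (d/dt)^k (∇f(z^{(k)}(t)))]`.
In particular `H(h) - H_GN(h)` remains bounded as `h → 0⁺`.
-/

open Filter Set Matrix

/-- Componentwise gradient of `f : ℝ^m → ℝ`. -/
noncomputable def grad {m : ℕ} (f : (Fin m → ℝ) → ℝ) (v : Fin m → ℝ) : Fin m → ℝ :=
  fun a => fderiv ℝ f v (Pi.single a 1)

/-- Hessian matrix of `f : ℝ^m → ℝ` at `v`. -/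
noncomputable def hess {m : ℕ} (f : (Fin m → ℝ) → ℝ) (v : Fin m → ℝ) :
    Matrix (Fin m) (Fin m) ℝ :=
  Matrix.of fun a b => fderiv ℝ (fun x => fderiv ℝ f x (Pi.single b 1)) v (Pi.single a 1)

/-- Jacobian matrix of `φ : ℝ^d → ℝ^m` at `x`. -/
noncomputable def jac {d m : ℕ} (φ : (Fin d → ℝ) → (Fin m → ℝ)) (x : Fin d → ℝ) :
    Matrix (Fin m) (Fin d) ℝ :=
  Matrix.of fun a p => fderiv ℝ φ x (Pi.single p 1) a

/-- Contraction `D²φ(x) · w = ∑_α w_α ∇²φ_α(x)` of the second derivative of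
`φ : ℝ^d → ℝ^m` with a vector `w ∈ ℝ^m`. -/
noncomputable def d2Contract {d m : ℕ} (φ : (Fin d → ℝ) → (Fin m → ℝ)) (x : Fin d → ℝ)
    (w : Fin m → ℝ) : Matrix (Fin d) (Fin d) ℝ :=
  ∑ a : Fin m, w a • hess (fun y => φ y a) x

/-- Frobenius norm of a square matrix. -/
noncomputable def frob {d : ℕ} (A : Matrix (Fin d) (Fin d) ℝ) : ℝ :=
  Real.sqrt (∑ p : Fin d, ∑ r : Fin d, (A p r) ^ 2)

/-!
Regard the finite difference quotient `h⁻¹ (g (s + h) - g s)` as `dslope g s (s + h)`, which at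
`h = 0` is the derivative. For smooth `g` it equals `∫ u in 0..1, g' (s + u h)` and is therefore
jointly smooth in `(h, s)`, with one degree of smoothness lost, even when `g` itself depends
smoothly on `h`. The clique values are `k`-fold forward quotients `w_h` of `z`, sampled at
`t - (k - i) h`. Since the transpose of a forward difference is, up to the sign `(-1) ^ k`, the
backward difference, the sum with coefficients `σ_{k-i} / h ^ k` is `(-1) ^ k` times the `k`-fold
quotient of `∇f ∘ w_h` at `t` with step `-h`. The Gauss-Newton terms cancel in `H - H_GN`, so what
is left agrees for `h ≠ 0` with a continuous function of `h`, which can be evaluated at `h = 0`.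
-/

open Function Topology

universe u v

theorem exists_eventually_forall_norm_le_of_isCompact {X Y E : Type*} [TopologicalSpace X]
    [TopologicalSpace Y] [SeminormedAddCommGroup E] {F : X → Y → E} (hF : Continuous (uncurry F))
    {K : Set Y} (hK : IsCompact K) (x : X) : ∃ C, ∀ᶠ y in 𝓝 x, ∀ u ∈ K, ‖F y u‖ ≤ C := by
  obtain ⟨C, hC⟩ := hK.exists_bound_of_continuousOn (f := F x) (by fun_prop)
  refine ⟨C + 1, hK.eventually_forall_of_forall_eventually fun u hu => ?_⟩
  have hnorm : Tendsto (fun p : X × Y => ‖F p.1 p.2‖) (𝓝 (x, u)) (𝓝 ‖F x u‖) :=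
    hF.norm.tendsto (x, u)
  exact hnorm.eventually_le_const ((hC u hu).trans_lt (lt_add_one C))

section ParametricIntegral

variable {X : Type u} [NormedAddCommGroup X] [NormedSpace ℝ X]

theorem hasFDerivAt_intervalIntegral_of_contDiff {E : Type*} [NormedAddCommGroup E]
    [NormedSpace ℝ E] {F : X → ℝ → E} (hF : ContDiff ℝ 1 (uncurry F)) (a b : ℝ) (x : X) :
    HasFDerivAt (fun y => ∫ u in a..b, F y u)
      (∫ u in a..b, fderiv ℝ (fun y => F y u) x) x := by
  have hF' : Continuous (uncurry fun y u => fderiv ℝ (fun y => F y u) y) :=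
    (ContDiff.fderiv (n := 0) (f := fun (p : X × ℝ) y => F y p.2) (by fun_prop)
      contDiff_fst (by simp)).continuous
  have hFc : Continuous (uncurry F) := hF.continuous
  obtain ⟨C, hC⟩ := exists_eventually_forall_norm_le_of_isCompact hF'
    (isCompact_uIcc (a := a) (b := b)) x
  refine intervalIntegral.hasFDerivAt_integral_of_dominated_of_fderiv_le (F := F)
    (F' := fun y u => fderiv ℝ (fun y => F y u) y) (bound := fun _ => C) hC ?_ ?_ ?_ ?_ ?_ ?_
  · exact Eventually.of_forall fun y => Continuous.aestronglyMeasurable (by fun_prop)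
  · exact Continuous.intervalIntegrable (by fun_prop) _ _
  · exact Continuous.aestronglyMeasurable (by fun_prop)
  · exact Eventually.of_forall fun u hu y hy => hy u (uIoc_subset_uIcc hu)
  · exact intervalIntegrable_const
  · have hdiff (u : ℝ) : Differentiable ℝ fun y => F y u :=
      (hF.comp (contDiff_prodMk_left u)).differentiable one_ne_zero
    exact Eventually.of_forall fun u _ y _ => (hdiff u y).hasFDerivAt

-- The induction replaces `E` by `X →L[ℝ] E`, so the universe of `E` has to absorb that of `X`.
theorem contDiff_intervalIntegral {n : ℕ} {E : Type (max u v)} [NormedAddCommGroup E]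
    [NormedSpace ℝ E] {F : X → ℝ → E} (hF : ContDiff ℝ n (uncurry F)) (a b : ℝ) :
    ContDiff ℝ n fun x => ∫ u in a..b, F x u := by
  induction n generalizing E with
  | zero =>
    exact contDiff_zero.2 <|
      intervalIntegral.continuous_parametric_intervalIntegral_of_continuous' hF.continuous a b
  | succ n ih =>
    refine contDiff_succ_iff_hasFDerivAt.2
      ⟨fun x => ∫ u in a..b, fderiv ℝ (fun y => F y u) x, ih ?_, fun x =>
        hasFDerivAt_intervalIntegral_of_contDiff (hF.of_le (by norm_cast; omega)) a b x⟩
    exact ContDiff.fderiv (f := fun (p : X × ℝ) y => F y p.2) (by fun_prop) contDiff_fst (by simp)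

end ParametricIntegral

theorem dslope_eq_intervalIntegral_deriv {E : Type*} [NormedAddCommGroup E] [NormedSpace ℝ E]
    [CompleteSpace E] {g : ℝ → E} (hg : ContDiff ℝ 1 g) (a b : ℝ) :
    dslope g a b = ∫ u in (0 : ℝ)..1, deriv g (a + (b - a) * u) := by
  rcases eq_or_ne b a with rfl | hab
  · simp
  · rw [dslope_of_ne g hab, slope_def_module,
      intervalIntegral.integral_comp_add_mul (deriv g) (sub_ne_zero.2 hab), mul_zero, mul_one,
      add_zero, add_sub_cancel,
      intervalIntegral.integral_deriv_eq_sub (fun x _ => hg.differentiable one_ne_zero x)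
        ((hg.continuous_deriv le_rfl).intervalIntegrable a b)]

theorem contDiff_dslope {X : Type u} [NormedAddCommGroup X] [NormedSpace ℝ X]
    {E : Type (max u v)} [NormedAddCommGroup E] [NormedSpace ℝ E] [CompleteSpace E] {n : ℕ}
    {g : X → ℝ → E} {a b : X → ℝ} (hg : ContDiff ℝ (n + 1) (uncurry g)) (ha : ContDiff ℝ n a)
    (hb : ContDiff ℝ n b) : ContDiff ℝ n fun x => dslope (g x) (a x) (b x) := by
  have hgx (x : X) : ContDiff ℝ 1 (g x) :=
    (hg.comp (contDiff_prodMk_right x)).of_le (by simp)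
  simp only [dslope_eq_intervalIntegral_deriv (hgx _), ← fderiv_apply_one_eq_deriv]
  refine contDiff_intervalIntegral ?_ 0 1
  exact ContDiff.fderiv_apply (f := fun (p : X × ℝ) s => g p.1 s)
    (g := fun p : X × ℝ => a p.1 + (b p.1 - a p.1) * p.2)
    (by fun_prop) (by fun_prop) contDiff_const le_rfl

/-- The difference quotient `(g (s + h) - g s) / h` of a function `g` as a function of `s`. At
`h = 0` it is defined to be `deriv g s` rather than `0`, so that it is continuous in `h`. -/
noncomputable def diffQuot {E : Type*} [NormedAddCommGroup E] [NormedSpace ℝ E] (h : ℝ)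
    (g : ℝ → E) (s : ℝ) : E :=
  dslope g s (s + h)

section DiffQuot

variable {E : Type*} [NormedAddCommGroup E] [NormedSpace ℝ E]

theorem diffQuot_zero_iterate (g : ℝ → E) (n : ℕ) : (diffQuot 0)^[n] g = iteratedDeriv n g := by
  have hderiv : diffQuot (E := E) 0 = deriv := by
    ext g s
    simp [diffQuot]
  rw [hderiv, iteratedDeriv_eq_iterate]

theorem smul_diffQuot (h : ℝ) (g : ℝ → E) : h • diffQuot h g = fwdDiff h g := by
  ext s
  simpa [diffQuot, fwdDiff] using sub_smul_dslope g s (s + h)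

theorem pow_smul_diffQuot_iterate (h : ℝ) (g : ℝ → E) (n : ℕ) :
    h ^ n • (diffQuot h)^[n] g = (fwdDiff h)^[n] g := by
  induction n with
  | zero => simp
  | succ n ih =>
    rw [iterate_succ_apply', iterate_succ_apply', pow_succ, mul_smul, smul_diffQuot, ← ih,
      fwdDiff_const_smul]

theorem diffQuot_iterate_eq_sum {h : ℝ} (hh : h ≠ 0) (g : ℝ → E) (n : ℕ) (s : ℝ) :
    (diffQuot h)^[n] g s =
      (h ^ n)⁻¹ • ∑ j ∈ Finset.range (n + 1),
        ((-1 : ℝ) ^ (n - j) * n.choose j) • g (s + j * h) := by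
  rw [eq_inv_smul_iff₀ (pow_ne_zero n hh), ← Pi.smul_apply, pow_smul_diffQuot_iterate,
    fwdDiff_iter_eq_sum_shift]
  refine Finset.sum_congr rfl fun j _ => ?_
  rw [← Int.cast_smul_eq_zsmul ℝ]
  simp

theorem sum_smul_eq_neg_one_pow_smul_diffQuot_neg_iterate {h : ℝ} (hh : h ≠ 0) (g : ℝ → E)
    (k : ℕ) (t : ℝ) :
    ∑ i ∈ Finset.range (k + 1),
        ((-1 : ℝ) ^ (k - (k - i)) * k.choose (k - i) / h ^ k) • g (t - (k - i) * h) =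
      (-1 : ℝ) ^ k • (diffQuot (-h))^[k] g t := by
  rw [diffQuot_iterate_eq_sum (neg_ne_zero.2 hh), smul_smul, Finset.smul_sum,
    ← Finset.sum_range_reflect]
  refine Finset.sum_congr rfl fun j hj => ?_
  have hjk : j ≤ k := Finset.mem_range_succ_iff.1 hj
  have hsample : t - (k - (k - j : ℕ)) * h = t + j * -h := by
    rw [Nat.cast_sub hjk]
    ring
  have hsign : (-1 : ℝ) ^ k * ((-h) ^ k)⁻¹ = (h ^ k)⁻¹ := by
    rw [neg_pow h, mul_inv, mul_inv_cancel_left₀ (pow_ne_zero k (by norm_num))]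
  rw [Nat.add_sub_cancel, Nat.sub_sub_self hjk, hsample, hsign, smul_smul, div_eq_inv_mul]

end DiffQuot

section Smoothness

variable {X : Type u} [NormedAddCommGroup X] [NormedSpace ℝ X]
  {E : Type (max u v)} [NormedAddCommGroup E] [NormedSpace ℝ E] [CompleteSpace E]

theorem contDiff_diffQuot {n : ℕ} {g : X → ℝ → E} {h : X → ℝ}
    (hg : ContDiff ℝ (n + 1) (uncurry g)) (hh : ContDiff ℝ n h) :
    ContDiff ℝ n (uncurry fun x => diffQuot (h x) (g x)) :=
  contDiff_dslope (g := fun p : X × ℝ => g p.1) (by fun_prop) contDiff_snd (by fun_prop)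

theorem contDiff_diffQuot_iterate {n k : ℕ} {g : X → ℝ → E} {h : X → ℝ}
    (hg : ContDiff ℝ (n + k : ℕ) (uncurry g)) (hh : ContDiff ℝ (n + k : ℕ) h) :
    ContDiff ℝ n (uncurry fun x => (diffQuot (h x))^[k] (g x)) := by
  induction k generalizing g with
  | zero => exact hg
  | succ k ih =>
    have hh' : ContDiff ℝ (n + k : ℕ) h := hh.of_le (by norm_cast; omega)
    exact ih (contDiff_diffQuot (hg.of_le (by norm_cast)) hh') hh'

end Smoothness

theorem tendsto_diffQuot_neg_iterate_comp_diffQuot_iterate {E F : Type*} [NormedAddCommGroup E]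
    [NormedSpace ℝ E] [CompleteSpace E] [NormedAddCommGroup F] [NormedSpace ℝ F] [CompleteSpace F]
    {k : ℕ} {z : ℝ → E} {g : E → F} (hz : ContDiff ℝ (2 * k : ℕ) z) (hg : ContDiff ℝ k g) (t : ℝ) :
    Tendsto (fun h : ℝ => (diffQuot (-h))^[k] (fun s => g ((diffQuot h)^[k] z s)) t) (𝓝 0)
      (𝓝 (iteratedDeriv k (fun s => g (iteratedDeriv k z s)) t)) := by
  have hinner : ContDiff ℝ k (uncurry fun h : ℝ => (diffQuot h)^[k] z) :=
    contDiff_diffQuot_iterate (g := fun _ => z) (h := id)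
      (two_mul k ▸ hz.comp contDiff_snd) contDiff_id
  have houter : ContDiff ℝ (0 : ℕ)
      (uncurry fun h : ℝ => (diffQuot (-h))^[k] fun s => g ((diffQuot h)^[k] z s)) :=
    contDiff_diffQuot_iterate ((zero_add k).symm ▸ hg.comp hinner) contDiff_neg
  have hlim := houter.continuous.tendsto (0, t) |>.comp
    ((Continuous.prodMk_left t).tendsto (0 : ℝ))
  simpa only [uncurry, Function.comp_def, neg_zero, diffQuot_zero_iterate] using hlim

theorem contDiff_grad {m n : ℕ} {f : (Fin m → ℝ) → ℝ} (hf : ContDiff ℝ (n + 1 : ℕ) f) :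
    ContDiff ℝ n (grad f) :=
  contDiff_pi.2 fun _ => (hf.fderiv_right (by norm_cast)).clm_apply contDiff_const

theorem d2Contract_eq_linearCombination {d m : ℕ} (φ : (Fin d → ℝ) → Fin m → ℝ)
    (x : Fin d → ℝ) :
    d2Contract φ x = Fintype.linearCombination ℝ fun a => hess (fun y => φ y a) x :=
  rfl

theorem d2Contract_sum_smul {ι : Type*} {d m : ℕ} (φ : (Fin d → ℝ) → Fin m → ℝ) (x : Fin d → ℝ)
    (s : Finset ι) (c : ι → ℝ) (w : ι → Fin m → ℝ) :
    d2Contract φ x (∑ i ∈ s, c i • w i) = ∑ i ∈ s, c i • d2Contract φ x (w i) := by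
  simp only [d2Contract_eq_linearCombination, map_sum, map_smul]

theorem continuous_d2Contract {d m : ℕ} (φ : (Fin d → ℝ) → Fin m → ℝ) (x : Fin d → ℝ) :
    Continuous (d2Contract φ x) := by
  rw [d2Contract_eq_linearCombination]
  exact LinearMap.continuous_of_finiteDimensional _

theorem continuous_frob {d : ℕ} : Continuous (frob (d := d)) := by
  unfold frob
  fun_prop

theorem exists_frob_le_of_tendsto_nhdsGT {d : ℕ} {A : ℝ → Matrix (Fin d) (Fin d) ℝ}
    {L : Matrix (Fin d) (Fin d) ℝ} {a : ℝ} (hA : Tendsto A (𝓝[>] a) (𝓝 L)) :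
    ∃ C b : ℝ, a < b ∧ ∀ h, a < h → h < b → frob (A h) ≤ C := by
  have hfrob := (continuous_frob.tendsto L).comp hA
  obtain ⟨b, hab, hsub⟩ :=
    mem_nhdsGT_iff_exists_Ioo_subset.1 (hfrob.eventually_le_const (lt_add_one (frob L)))
  exact ⟨_, b, hab, fun h hah hhb => hsub ⟨hah, hhb⟩⟩

theorem hessian_minus_gaussNewton_tendsto_curvature_correction_general
    {d m : ℕ} (q : ℝ → (Fin d → ℝ)) (φ : (Fin d → ℝ) → (Fin m → ℝ))
    (f : (Fin m → ℝ) → ℝ) (k : ℕ) (_hk : 1 ≤ k)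
    (hq : ContDiff ℝ (2 * k : ℕ) q) (hφ : ContDiff ℝ (2 * k : ℕ) φ) (hf : ContDiff ℝ (k + 1 : ℕ) f)
    (t : ℝ)
    (z : ℝ → Fin m → ℝ) (hz : z = fun s => φ (q s))
    (σ : ℕ → ℝ) (hσ : ∀ j, σ j = (-1 : ℝ) ^ (k - j) * (k.choose j : ℝ))
    (v : ℕ → ℝ → Fin m → ℝ)
    (hv : ∀ i h, v i h =
      (h ^ k)⁻¹ •
        ∑ j ∈ Finset.range (k + 1), σ j • z (t + ((j : ℝ) - ((k : ℝ) - (i : ℝ))) * h))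
    (H HGN : ℝ → Matrix (Fin d) (Fin d) ℝ)
    (hH : ∀ h, H h =
      ∑ i ∈ Finset.range (k + 1),
        (((σ (k - i)) ^ 2 / h ^ (2 * k)) •
            ((jac φ (q t))ᵀ * hess f (v i h) * jac φ (q t)) +
          (σ (k - i) / h ^ k) • d2Contract φ (q t) (grad f (v i h))))
    (hHGN : ∀ h, HGN h =
      ∑ i ∈ Finset.range (k + 1),
        ((σ (k - i)) ^ 2 / h ^ (2 * k)) •
          ((jac φ (q t))ᵀ * hess f (v i h) * jac φ (q t))) :
    Tendsto (fun h : ℝ => H h - HGN h) (𝓝[≠] 0)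
      (𝓝 (d2Contract φ (q t)
        ((-1 : ℝ) ^ k • iteratedDeriv k (fun s => grad f (iteratedDeriv k z s)) t))) := by
  have hz_smooth : ContDiff ℝ (2 * k : ℕ) z := hz ▸ hφ.comp hq
  have hclique (i : ℕ) {h : ℝ} (hh : h ≠ 0) : v i h = (diffQuot h)^[k] z (t - (k - i) * h) := by
    have hsample (j : ℕ) : t + (j - (k - i)) * h = t - (k - i) * h + j * h := by ring
    simp only [hv, hσ, diffQuot_iterate_eq_sum hh, hsample]
  have hdiff {h : ℝ} (hh : h ≠ 0) : H h - HGN h = d2Contract φ (q t) ((-1 : ℝ) ^ k •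
      (diffQuot (-h))^[k] (fun s => grad f ((diffQuot h)^[k] z s)) t) := by
    rw [hH, hHGN, Finset.sum_add_distrib, add_sub_cancel_left, ← d2Contract_sum_smul,
      ← sum_smul_eq_neg_one_pow_smul_diffQuot_neg_iterate hh]
    simp only [hσ, hclique _ hh]
  have hlim := (tendsto_diffQuot_neg_iterate_comp_diffQuot_iterate hz_smooth (contDiff_grad hf)
    t).const_smul ((-1 : ℝ) ^ k)
  have hcontract := ((continuous_d2Contract φ (q t)).tendsto _).comp hlim
  exact (hcontract.mono_left nhdsWithin_le_nhds).congr' <|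
    eventually_mem_nhdsWithin.mono fun h hh => (hdiff hh).symm

theorem hessian_minus_gaussNewton_tendsto_curvature_correction
    {d m : ℕ} (q : ℝ → (Fin d → ℝ)) (φ : (Fin d → ℝ) → (Fin m → ℝ))
    (f : (Fin m → ℝ) → ℝ)
    (hq : ContDiff ℝ (⊤ : ℕ∞) q) (hφ : ContDiff ℝ (⊤ : ℕ∞) φ) (hf : ContDiff ℝ (⊤ : ℕ∞) f)
    (k : ℕ) (hk : 1 ≤ k) (t : ℝ)
    (z : ℝ → Fin m → ℝ) (hz : z = fun s => φ (q s))
    (σ : ℕ → ℝ) (hσ : ∀ j, σ j = (-1 : ℝ) ^ (k - j) * (k.choose j : ℝ))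
    (v : ℕ → ℝ → Fin m → ℝ)
    (hv : ∀ i h, v i h =
      (h ^ k)⁻¹ •
        ∑ j ∈ Finset.range (k + 1), σ j • z (t + ((j : ℝ) - ((k : ℝ) - (i : ℝ))) * h))
    (H HGN : ℝ → Matrix (Fin d) (Fin d) ℝ)
    (hH : ∀ h, H h =
      ∑ i ∈ Finset.range (k + 1),
        (((σ (k - i)) ^ 2 / h ^ (2 * k)) •
            ((jac φ (q t))ᵀ * hess f (v i h) * jac φ (q t)) +
          (σ (k - i) / h ^ k) • d2Contract φ (q t) (grad f (v i h))))
    (hHGN : ∀ h, HGN h =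
      ∑ i ∈ Finset.range (k + 1),
        ((σ (k - i)) ^ 2 / h ^ (2 * k)) •
          ((jac φ (q t))ᵀ * hess f (v i h) * jac φ (q t))) :
    Tendsto (fun h : ℝ => H h - HGN h) (nhdsWithin 0 (Ioi 0))
      (nhds (d2Contract φ (q t)
        ((-1 : ℝ) ^ k • iteratedDeriv k (fun s => grad f (iteratedDeriv k z s)) t))) ∧
    ∃ C h₀ : ℝ, 0 < h₀ ∧ ∀ h : ℝ, 0 < h → h < h₀ → frob (H h - HGN h) ≤ C := by
  have hT := (hessian_minus_gaussNewton_tendsto_curvature_correction_general q φ f k hk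
    (contDiff_infty.1 hq _) (contDiff_infty.1 hφ _) (contDiff_infty.1 hf _)
    t z hz σ hσ v hv H HGN hH hHGN).mono_left (nhdsGT_le_nhdsNE 0)
  exact ⟨hT, exists_frob_le_of_tendsto_nhdsGT hT⟩
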